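/- Let G = (V,E) be a finite simple graph, r : V → ℕ a requirement function, and S ⊆ V. Then S is a vector connectivity set for (G,r) if and only if for every non-empty set X ⊆ V such that the induced subgraph G[X] is connected and max_{x∈X} r(x) > |N_G(X)|, we have S ∩ X ≠ ∅. -/

import Mathlib

open SimpleGraph

/-- A `v`–`S` fan of order `k` in `G`: `k` paths from `v` to vertices of `S`,
with distinct endpoints, pairwise intersecting only in `v`. -/
def HasFan {V : Type*} (G : SimpleGraph V) (v : V) (S : Set V) (k : ℕ) : Prop :=
  ∃ (t : Fin k → V) (p : ∀ i : Fin k, G.Walk v (t i)),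
    Function.Injective t ∧ (∀ i, (p i).IsPath) ∧ (∀ i, t i ∈ S) ∧
    ∀ i j, i ≠ j → ∀ x ∈ (p i).support, x ∈ (p j).support → x = v

/-- `S` is a vector connectivity set for `(G, r)`. -/
def VecConnSet {V : Type*} (G : SimpleGraph V) (r : V → ℕ) (S : Set V) : Prop :=
  ∀ v, v ∉ S → HasFan G v S (r v)

/-- The neighborhood `N_G(X)` of a set of vertices. -/
def setNbhd {V : Type*} (G : SimpleGraph V) (X : Set V) : Set V :=
  {u | u ∉ X ∧ ∃ x ∈ X, G.Adj x u}

/-! Menger's theorem turns the existence of a `v`–`S` fan of order `k` into the statement that no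
set of fewer than `k` vertices avoiding `v` separates `v` from `S`. If `X` contains `v` and misses
`S`, then `N_G(X)` is such a separator; conversely a separator `C` contains the neighborhood of the
connected set of vertices that can be reached from `v` without meeting `C`.

Menger's theorem for graphs with finitely many edges is Göring's induction: a separator `C` of
`G - xy` that is too small for `G` becomes one of least order after adding `x` or `y`, so the
induction hypothesis links `A` to `C ∪ {x}` and `B` to `C ∪ {y}`, and the edge `xy` joins the two
linkages. In general, suppose that `m` disjoint paths are given and that no `m` vertices separate.
In any subgraph containing the paths, a separator of at most `m` vertices has all its vertices on
them; there are finitely many such sets, and adding to the paths one walk avoiding each of these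
sets gives a finite subgraph without separators of order at most `m`, hence with `m + 1` disjoint
paths. -/

section

variable {V ι κ : Type*} {G H : SimpleGraph V} {A B C D T : Set V} {s t v x y : V} {k : ℕ}

/-! ### Reachability and separation -/

/-- The vertices that can be reached from `A` along a walk of `G` avoiding `C` altogether,
its two ends included. -/
def reachAvoiding (G : SimpleGraph V) (A C : Set V) : Set V :=
  {z | ∃ a ∈ A, ∃ p : G.Walk a z, ∀ u ∈ p.support, u ∉ C}

/-- `C` is an `A`–`B` separator in `G`: every walk from `A` to `B` meets `C`. The set `C` may meet
`A` and `B`. -/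
def Separates (G : SimpleGraph V) (A B C : Set V) : Prop :=
  ∀ a ∈ A, ∀ b ∈ B, ∀ p : G.Walk a b, ∃ z ∈ p.support, z ∈ C

theorem sdiff_subset_reachAvoiding : A \ C ⊆ reachAvoiding G A C :=
  fun a ha => ⟨a, ha.1, .nil, by simpa using ha.2⟩

theorem notMem_of_mem_reachAvoiding (hx : x ∈ reachAvoiding G A C) : x ∉ C := by
  obtain ⟨a, -, p, hp⟩ := hx
  exact hp x p.end_mem_support

theorem mem_reachAvoiding_of_adj (hx : x ∈ reachAvoiding G A C) (hxy : G.Adj x y) (hy : y ∉ C) :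
    y ∈ reachAvoiding G A C := by
  obtain ⟨a, ha, p, hp⟩ := hx
  refine ⟨a, ha, p.concat hxy, fun u hu => ?_⟩
  rw [Walk.support_concat, List.mem_append, List.mem_singleton] at hu
  obtain hu | rfl := hu
  exacts [hp u hu, hy]

theorem mem_reachAvoiding_of_mem_support {a b z : V} (ha : a ∈ A) {p : G.Walk a b}
    (hp : ∀ u ∈ p.support, u ∉ C) (hz : z ∈ p.support) : z ∈ reachAvoiding G A C := by
  classical
  exact ⟨a, ha, p.takeUntil z hz, fun u hu => hp u (p.support_takeUntil_subset_support hz hu)⟩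

theorem reachAvoiding_subset_of_forall_adj {R : Set V} (hA : A \ C ⊆ R)
    (hR : ∀ u ∈ R, ∀ w, G.Adj u w → w ∉ C → w ∈ R) : reachAvoiding G A C ⊆ R := by
  rintro z ⟨a, ha, p, hp⟩
  replace ha : a ∈ R := hA ⟨ha, hp a p.start_mem_support⟩
  induction p with
  | nil => exact ha
  | cons h p ih =>
    simp only [Walk.support_cons, List.forall_mem_cons] at hp
    exact ih hp.2 (hR _ ha _ h (hp.2 _ p.start_mem_support))

theorem reachAvoiding_subset_of_disjoint (h : Disjoint (reachAvoiding G A D) C) :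
    reachAvoiding G A D ⊆ reachAvoiding G A C := by
  rintro z ⟨a, ha, p, hp⟩
  exact ⟨a, ha, p, fun u hu =>
    Set.disjoint_left.1 h (mem_reachAvoiding_of_mem_support ha hp hu)⟩

theorem reachAvoiding_subset_deleteEdges {E : Set (Sym2 V)}
    (hE : ∀ u ∈ reachAvoiding (G.deleteEdges E) A C, ∀ w, w ∉ C → s(u, w) ∉ E) :
    reachAvoiding G A C ⊆ reachAvoiding (G.deleteEdges E) A C :=
  reachAvoiding_subset_of_forall_adj sdiff_subset_reachAvoiding fun u hu w huw hw =>
    mem_reachAvoiding_of_adj hu (deleteEdges_adj.2 ⟨huw, hE u hu w hw⟩) hw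

theorem connected_induce_reachAvoiding (hv : v ∉ C) :
    (G.induce (reachAvoiding G {v} C)).Connected := by
  refine induce_connected_of_patches v (sdiff_subset_reachAvoiding ⟨rfl, hv⟩) ?_
  rintro u ⟨_, rfl, p, hp⟩
  exact ⟨{z | z ∈ p.support}, fun z => mem_reachAvoiding_of_mem_support (Set.mem_singleton _) hp,
    p.start_mem_support, p.end_mem_support, p.connected_induce_support.preconnected _ _⟩

theorem setNbhd_reachAvoiding_subset : setNbhd G (reachAvoiding G A C) ⊆ C := by
  rintro u ⟨hu, x, hx, hxu⟩
  exact not_not.1 fun huC => hu (mem_reachAvoiding_of_adj hx hxu huC)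

theorem separates_iff_disjoint_reachAvoiding :
    Separates G A B C ↔ Disjoint (reachAvoiding G A C) B := by
  rw [Set.disjoint_left]
  constructor
  · rintro h b ⟨a, ha, p, hp⟩ hb
    obtain ⟨z, hz, hzC⟩ := h a ha b hb p
    exact hp z hz hzC
  · intro h a ha b hb p
    by_contra! hp
    exact h ⟨a, ha, p, hp⟩ hb

theorem separates_setNbhd (hA : A ⊆ D) (hB : Disjoint D B) : Separates G A B (setNbhd G D) := by
  refine separates_iff_disjoint_reachAvoiding.2 (hB.mono_left ?_)
  refine reachAvoiding_subset_of_forall_adj (Set.sdiff_subset.trans hA) fun u hu w huw hw => ?_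
  exact not_not.1 fun hwD => hw ⟨hwD, u, hu, huw⟩

theorem Separates.symm (h : Separates G A B C) : Separates G B A C := fun b hb a ha p => by
  simpa using h a ha b hb p.reverse

theorem Separates.mono_right (h : Separates G A B C) (hCD : C ⊆ D) : Separates G A B D :=
  fun a ha b hb p => (h a ha b hb p).imp fun _ hz => ⟨hz.1, hCD hz.2⟩

theorem Separates.anti_graph (hHG : H ≤ G) (h : Separates G A B C) : Separates H A B C :=
  fun a ha b hb p => by simpa using h a ha b hb (p.mapLe hHG)

theorem Separates.disjoint_reachAvoiding (h : Separates G A B C) :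
    Disjoint (reachAvoiding G A C) (reachAvoiding G B C) := by
  refine Set.disjoint_left.2 ?_
  rintro z ⟨a, ha, p, hp⟩ ⟨b, hb, q, hq⟩
  obtain ⟨u, hu, huC⟩ := h a ha b hb (p.append q.reverse)
  rw [Walk.mem_support_append_iff, Walk.support_reverse, List.mem_reverse] at hu
  exact hu.elim (hp u · huC) (hq u · huC)

/-! ### Separators and deletion of an edge or a vertex -/

theorem Separates.insert_of_deleteEdges (h : Separates (G.deleteEdges {s(x, y)}) A B C) :
    Separates G A B (insert x C) := by
  have h' := separates_iff_disjoint_reachAvoiding.1 (h.mono_right (Set.subset_insert x C))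
  refine separates_iff_disjoint_reachAvoiding.2 (h'.mono_left ?_)
  refine reachAvoiding_subset_deleteEdges fun u hu w hw => ?_
  have hux : u ≠ x := fun hux => notMem_of_mem_reachAvoiding hu (Or.inl hux)
  have hwx : w ≠ x := fun hwx => hw (Or.inl hwx)
  simp [hux, hwx]

theorem Separates.of_deleteEdges_left (h : Separates (G.deleteEdges {s(x, y)}) A B C)
    (hy : y ∉ reachAvoiding (G.deleteEdges {s(x, y)}) A C)
    (hD : Separates (G.deleteEdges {s(x, y)}) A (insert x C) D) : Separates G A B D := by
  rw [separates_iff_disjoint_reachAvoiding] at h hD ⊢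
  have hsub := reachAvoiding_subset_of_disjoint (hD.mono_right (Set.subset_insert x C))
  refine (h.mono_left hsub).mono_left (reachAvoiding_subset_deleteEdges fun u hu w _ => ?_)
  have hux : u ≠ x := fun hux => Set.disjoint_left.1 hD hu (Or.inl hux)
  have huy : u ≠ y := fun huy => hy (huy ▸ hsub hu)
  simp [hux, huy]

theorem Separates.mem_reachAvoiding_or (h : Separates (G.deleteEdges {s(x, y)}) A B C)
    (hG : ¬ Separates G A B C) :
    x ∈ reachAvoiding (G.deleteEdges {s(x, y)}) A C ∨
      y ∈ reachAvoiding (G.deleteEdges {s(x, y)}) A C := by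
  by_contra! hxy
  rw [separates_iff_disjoint_reachAvoiding] at h hG
  refine hG (h.mono_left (reachAvoiding_subset_deleteEdges fun u hu w _ => ?_))
  have hux : u ≠ x := fun hux => hxy.1 (hux ▸ hu)
  have huy : u ≠ y := fun huy => hxy.2 (huy ▸ hu)
  simp [hux, huy]

theorem Separates.of_deleteIncidenceSet (hv : v ∉ B)
    (h : Separates (G.deleteIncidenceSet v) (G.neighborSet v) B C) :
    Separates G {v} B (C \ {v}) := by
  rw [separates_iff_disjoint_reachAvoiding] at h ⊢
  refine (Set.disjoint_insert_left.2 ⟨hv, h⟩).mono_left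
    (reachAvoiding_subset_of_forall_adj (fun u hu => Or.inl hu.1) fun u hu w huw hw => ?_)
  by_cases hwv : w = v
  · exact Or.inl hwv
  replace hw : w ∉ C := fun hwC => hw ⟨hwC, hwv⟩
  refine Or.inr ?_
  by_cases huv : u = v
  · exact sdiff_subset_reachAvoiding ⟨huv ▸ huw, hw⟩
  · exact mem_reachAvoiding_of_adj (hu.resolve_left huv)
      (deleteIncidenceSet_adj.2 ⟨huw, huv, hwv⟩) hw

/-! ### Linkages -/

/-- `T` is the vertex set of a path of `G` from `A` to `B`. -/
def IsPathSupport (G : SimpleGraph V) (A B T : Set V) : Prop :=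
  ∃ a ∈ A, ∃ b ∈ B, ∃ p : G.Walk a b, p.IsPath ∧ {z | z ∈ p.support} = T

/-- A family of pairwise disjoint `A`–`B` paths of `G`, each recorded by its vertex set only; the
index type tells the number of paths. -/
structure IsLinkage (G : SimpleGraph V) (A B : Set V) (T : ι → Set V) : Prop where
  isPathSupport : ∀ i, IsPathSupport G A B (T i)
  pairwise_disjoint : Pairwise (Function.onFun Disjoint T)

theorem IsPathSupport.mono (hGH : G ≤ H) (hT : IsPathSupport G A B T) : IsPathSupport H A B T := by
  obtain ⟨a, ha, b, hb, p, hp, rfl⟩ := hT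
  exact ⟨a, ha, b, hb, p.mapLe hGH, by simpa using hp, by simp⟩

theorem IsPathSupport.finite (hT : IsPathSupport G A B T) : T.Finite := by
  obtain ⟨a, -, b, -, p, -, rfl⟩ := hT
  exact p.support.finite_toSet

theorem IsPathSupport.end_mem (hT : IsPathSupport G A {t} T) : t ∈ T := by
  obtain ⟨a, -, b, rfl, p, -, rfl⟩ := hT
  exact p.end_mem_support

theorem IsPathSupport.exists_mem_end (hT : IsPathSupport G A B T) :
    ∃ b ∈ B, IsPathSupport G A {b} T := by
  obtain ⟨a, ha, b, hb, p⟩ := hT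
  exact ⟨b, hb, a, ha, b, rfl, p⟩

theorem Separates.inter_nonempty (hC : Separates G A B C) (hT : IsPathSupport G A B T) :
    (T ∩ C).Nonempty := by
  obtain ⟨a, ha, b, hb, p, -, rfl⟩ := hT
  exact hC a ha b hb p

theorem IsPathSupport.sdiff_subset_reachAvoiding (hT : IsPathSupport G A {t} T)
    (hTC : T ∩ C ⊆ {t}) : T \ C ⊆ reachAvoiding G A C := by
  classical
  obtain ⟨a, ha, _, rfl, p, hp, rfl⟩ := hT
  rintro z ⟨hz, hzC⟩
  refine ⟨a, ha, p.takeUntil z hz, fun u hu huC => ?_⟩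
  obtain rfl : u = _ := hTC ⟨p.support_takeUntil_subset_support hz hu, huC⟩
  exact Walk.endpoint_notMem_support_takeUntil hp hz (fun h => hzC (h ▸ huC)) hu

theorem IsPathSupport.exists_subset_union (hA : IsPathSupport G A {s} C)
    (hB : IsPathSupport G B {t} D) (hst : s = t ∨ G.Adj s t) :
    ∃ T ⊆ C ∪ D, IsPathSupport G A B T := by
  classical
  obtain ⟨a, ha, _, rfl, p, -, rfl⟩ := hA
  obtain ⟨b, hb, _, rfl, q, -, rfl⟩ := hB
  obtain ⟨w, hw⟩ : ∃ w : G.Walk a b, ∀ z ∈ w.support, z ∈ p.support ∨ z ∈ q.support := by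
    obtain rfl | hst := hst
    · exact ⟨p.append q.reverse, fun z hz => by simpa [Walk.mem_support_append_iff] using hz⟩
    · exact ⟨p.append (.cons hst q.reverse), fun z hz => by
        rw [Walk.mem_support_append_iff, Walk.support_cons, List.mem_cons, Walk.support_reverse,
          List.mem_reverse] at hz
        obtain hz | rfl | hz := hz
        exacts [Or.inl hz, Or.inl p.end_mem_support, Or.inr hz]⟩
  exact ⟨_, fun z hz => hw z (w.support_bypass_subset_support hz), a, ha, b, hb, w.bypass,
    w.bypass_isPath, rfl⟩

theorem IsLinkage.mono (hGH : G ≤ H) {T : ι → Set V} (hT : IsLinkage G A B T) :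
    IsLinkage H A B T :=
  ⟨fun i => (hT.isPathSupport i).mono hGH, hT.pairwise_disjoint⟩

theorem IsLinkage.comp_injective {T : ι → Set V} (hT : IsLinkage G A B T) {f : κ → ι}
    (hf : f.Injective) : IsLinkage G A B (T ∘ f) :=
  ⟨fun i => hT.isPathSupport (f i), fun _ _ hij => hT.pairwise_disjoint (hf.ne hij)⟩

theorem IsLinkage.eq_of_mem {T : ι → Set V} (hT : IsLinkage G A B T) {i j : ι} (hi : x ∈ T i)
    (hj : x ∈ T j) : i = j :=
  hT.pairwise_disjoint.eq (Set.not_disjoint_iff.2 ⟨x, hi, hj⟩)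

theorem IsLinkage.injective_of_mem {T : ι → Set V} (hT : IsLinkage G A B T) {f : ι → V}
    (hf : ∀ i, f i ∈ T i) : f.Injective :=
  fun i j hij => hT.eq_of_mem (hf i) (hij ▸ hf j)

theorem IsLinkage.exists_forall_isPathSupport_apply [Finite ι] {e : ι → V} {T : ι → Set V}
    (hT : IsLinkage G A (Set.range e) T) :
    ∃ P : ι → Set V, IsLinkage G A (Set.range e) P ∧ ∀ i, IsPathSupport G A {e i} (P i) := by
  have hend (i : ι) : ∃ j, IsPathSupport G A {e j} (T i) := by
    obtain ⟨_, ⟨j, rfl⟩, hj⟩ := (hT.isPathSupport i).exists_mem_end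
    exact ⟨j, hj⟩
  choose f hf using hend
  have hef : (e ∘ f).Injective := hT.injective_of_mem fun i => (hf i).end_mem
  let σ := Equiv.ofBijective f (Finite.injective_iff_bijective.1 hef.of_comp)
  refine ⟨T ∘ σ.symm, hT.comp_injective σ.symm.injective, fun i => ?_⟩
  simpa only [σ, Equiv.ofBijective_apply_symm_apply, Function.comp_apply] using hf (σ.symm i)

/-! ### Menger's theorem -/

/-- The nontrivial direction of Menger's theorem for `G`: there are as many disjoint `A`–`B` paths
as the order of every `A`–`B` separator allows. -/
def HasMengerProperty (G : SimpleGraph V) : Prop :=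
  ∀ (A B : Set V) (k : ℕ), (∀ C, Separates G A B C → k ≤ C.encard) →
    ∃ T : Fin k → Set V, IsLinkage G A B T

theorem HasMengerProperty.exists_isLinkage (hG : HasMengerProperty G) [Finite ι]
    (h : ∀ C, Separates G A B C → (Nat.card ι : ℕ∞) ≤ C.encard) :
    ∃ T : ι → Set V, IsLinkage G A B T := by
  obtain ⟨T, hT⟩ := hG A B _ h
  exact ⟨_, hT.comp_injective (Finite.equivFin ι).injective⟩

theorem hasMengerProperty_bot : HasMengerProperty (⊥ : SimpleGraph V) := by
  intro A B k hk
  have hAB : Separates (⊥ : SimpleGraph V) A B (A ∩ B) := by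
    intro a ha b hb p
    cases p with
    | nil => exact ⟨a, Walk.start_mem_support _, ha, hb⟩
    | cons h _ => exact h.elim
  obtain ⟨E, hE, hEk⟩ := Set.exists_subset_encard_eq (hk _ hAB)
  have : Finite E := Set.finite_of_encard_eq_coe hEk
  let e := Finite.equivFinOfCardEq (show Nat.card E = k by
    rw [Nat.card_coe_set_eq, Set.ncard_def, hEk, ENat.toNat_natCast])
  refine ⟨fun i => {(e.symm i : V)}, fun i => ?_, fun i j hij => ?_⟩
  · obtain ⟨ha, hb⟩ := hE (e.symm i).2
    exact ⟨_, ha, _, hb, .nil, .nil, by simp⟩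
  · exact Set.disjoint_singleton.2 fun h => hij (e.symm.injective (Subtype.ext h))

theorem natCast_card_option_coe (hC : C.Finite) : (Nat.card (Option C) : ℕ∞) = C.encard + 1 := by
  have : Finite C := hC
  rw [Finite.card_option, Nat.cast_succ, Nat.card_coe_set_eq, hC.cast_ncard_eq]

-- `Option C` indexes the paths ending in `insert x C`: the path indexed by `none` ends in `x`.
theorem HasMengerProperty.exists_isLinkage_to_insert (hG : HasMengerProperty G) (hC : C.Finite)
    (h : ∀ D, Separates G A (insert x C) D → C.encard + 1 ≤ D.encard) :
    ∃ P : Option C → Set V, IsLinkage G A (insert x C) P ∧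
      ∀ i, IsPathSupport G A {i.elim x (↑)} (P i) := by
  have : Finite C := hC
  have hrange : Set.range (fun i : Option C => i.elim x (↑)) = insert x C := by
    rw [Option.range_elim, Subtype.range_coe]
  rw [← hrange] at h ⊢
  obtain ⟨T, hT⟩ := hG.exists_isLinkage (ι := Option C) fun D hD =>
    natCast_card_option_coe hC ▸ h D hD
  exact hT.exists_forall_isPathSupport_apply

theorem IsLinkage.eq_some_of_mem {P : Option C → Set V} (hP : IsLinkage G A B P)
    (hend : ∀ i, IsPathSupport G A {i.elim x (↑)} (P i)) {i : Option C} {z : V} (hz : z ∈ P i)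
    (hzC : z ∈ C) : i = some ⟨z, hzC⟩ :=
  hP.eq_of_mem hz (hend (some ⟨z, hzC⟩)).end_mem

theorem IsLinkage.sdiff_subset_reachAvoiding {P : Option C → Set V} (hP : IsLinkage G A B P)
    (hend : ∀ i, IsPathSupport G A {i.elim x (↑)} (P i)) (i : Option C) :
    P i \ C ⊆ reachAvoiding G A C := by
  refine (hend i).sdiff_subset_reachAvoiding fun z hz => ?_
  rw [hP.eq_some_of_mem hend hz.1 hz.2]
  rfl

theorem Separates.disjoint_of_isLinkage (hC : Separates G A B C) {P Q : Option C → Set V}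
    {A' B' : Set V} (hP : IsLinkage G A A' P) (hQ : IsLinkage G B B' Q)
    (hPend : ∀ i, IsPathSupport G A {i.elim x (↑)} (P i))
    (hQend : ∀ i, IsPathSupport G B {i.elim y (↑)} (Q i)) {i j : Option C} (hij : i ≠ j) :
    Disjoint (P i) (Q j) := by
  refine Set.disjoint_left.2 fun z hzP hzQ => ?_
  by_cases hzC : z ∈ C
  · exact hij ((hP.eq_some_of_mem hPend hzP hzC).trans (hQ.eq_some_of_mem hQend hzQ hzC).symm)
  · exact Set.disjoint_left.1 hC.disjoint_reachAvoiding
      (hP.sdiff_subset_reachAvoiding hPend i ⟨hzP, hzC⟩)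
      (hQ.sdiff_subset_reachAvoiding hQend j ⟨hzQ, hzC⟩)

theorem Separates.exists_isLinkage_of_adj (hHG : H ≤ G) (hxy : G.Adj x y) (hC : Separates H A B C)
    {P Q : Option C → Set V} {A' B' : Set V} (hP : IsLinkage H A A' P) (hQ : IsLinkage H B B' Q)
    (hPend : ∀ i, IsPathSupport H A {i.elim x (↑)} (P i))
    (hQend : ∀ i, IsPathSupport H B {i.elim y (↑)} (Q i)) :
    ∃ T : Option C → Set V, IsLinkage G A B T := by
  have hjoin (i : Option C) : ∃ T ⊆ P i ∪ Q i, IsPathSupport G A B T := by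
    refine ((hPend i).mono hHG).exists_subset_union ((hQend i).mono hHG) ?_
    cases i with
    | none => exact Or.inr hxy
    | some c => exact Or.inl rfl
  choose T hTsub hT using hjoin
  refine ⟨T, hT, fun i j hij => Disjoint.mono (hTsub i) (hTsub j) ?_⟩
  simp only [Set.disjoint_union_left, Set.disjoint_union_right]
  exact ⟨⟨hP.pairwise_disjoint hij, (hC.disjoint_of_isLinkage hP hQ hPend hQend hij.symm).symm⟩,
    hC.disjoint_of_isLinkage hP hQ hPend hQend hij, hQ.pairwise_disjoint hij⟩

theorem HasMengerProperty.exists_isLinkage_of_adj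
    (hG : HasMengerProperty (G.deleteEdges {s(x, y)})) (hxy : G.Adj x y) (hCfin : C.Finite)
    (hC : Separates (G.deleteEdges {s(x, y)}) A B C)
    (hx : x ∈ reachAvoiding (G.deleteEdges {s(x, y)}) A C)
    (hy : y ∈ reachAvoiding (G.deleteEdges {s(x, y)}) B C)
    (hD : ∀ D, Separates G A B D → C.encard + 1 ≤ D.encard) :
    ∃ T : Option C → Set V, IsLinkage G A B T := by
  have hyA := Set.disjoint_right.1 hC.disjoint_reachAvoiding hy
  have hxB := Set.disjoint_left.1 hC.disjoint_reachAvoiding hx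
  obtain ⟨P, hP, hPend⟩ := hG.exists_isLinkage_to_insert hCfin
    fun D hAD => hD D (hC.of_deleteEdges_left hyA hAD)
  obtain ⟨Q, hQ, hQend⟩ := hG.exists_isLinkage_to_insert (A := B) (x := y) hCfin fun D hBD => by
    rw [Sym2.eq_swap] at hC hxB hBD
    exact hD D (hC.symm.of_deleteEdges_left hxB hBD).symm
  exact hC.exists_isLinkage_of_adj (deleteEdges_le _) hxy hP hQ hPend hQend

theorem HasMengerProperty.of_deleteEdges (hxy : G.Adj x y)
    (hG : HasMengerProperty (G.deleteEdges {s(x, y)})) : HasMengerProperty G := by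
  intro A B k hk
  by_cases hk' : ∀ C, Separates (G.deleteEdges {s(x, y)}) A B C → k ≤ C.encard
  · obtain ⟨T, hT⟩ := hG A B k hk'
    exact ⟨T, hT.mono (deleteEdges_le _)⟩
  push Not at hk'
  obtain ⟨C, hC, hCk⟩ := hk'
  have hCfin : C.Finite := Set.finite_of_encard_le_coe hCk.le
  have : Finite C := hCfin
  have hnC : ¬ Separates G A B C := fun h => (hk C h).not_gt hCk
  have hcard : C.encard + 1 = k := (Order.add_one_le_of_lt hCk).antisymm
    ((hk _ hC.insert_of_deleteEdges).trans (Set.encard_insert_le _ _))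
  have hCk' : Nat.card (Option C) = k := by
    rw [← ENat.natCast_inj, natCast_card_option_coe hCfin, hcard]
  rw [← hcard] at hk
  suffices ∃ T : Option C → Set V, IsLinkage G A B T by
    obtain ⟨T, hT⟩ := this
    exact ⟨_, hT.comp_injective (Finite.equivFinOfCardEq hCk').symm.injective⟩
  have hAB := hC.disjoint_reachAvoiding.notMem_of_mem_left
  obtain hx | hy := hC.mem_reachAvoiding_or hnC <;>
  obtain hx' | hy' := hC.symm.mem_reachAvoiding_or fun h => hnC h.symm
  · exact (hAB hx hx').elim
  · exact hG.exists_isLinkage_of_adj hxy hCfin hC hx hy' hk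
  · rw [Sym2.eq_swap] at hG hC hy hx'
    exact hG.exists_isLinkage_of_adj hxy.symm hCfin hC hy hx' hk
  · exact (hAB hy hy').elim

theorem hasMengerProperty_of_finite_edgeSet (hG : G.edgeSet.Finite) : HasMengerProperty G := by
  induction hn : G.edgeSet.ncard generalizing G with
  | zero =>
    rw [Set.ncard_eq_zero hG, edgeSet_eq_empty] at hn
    exact hn ▸ hasMengerProperty_bot
  | succ n ih =>
    obtain ⟨⟨x, y⟩, hxy⟩ := Set.nonempty_of_ncard_ne_zero (hn.trans_ne n.succ_ne_zero)
    refine .of_deleteEdges hxy (ih ?_ ?_)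
    · exact hG.subset (edgeSet_mono (deleteEdges_le _))
    · rw [edgeSet_deleteEdges, Set.ncard_sdiff_singleton_of_mem hxy, hn, Nat.add_sub_cancel]

theorem exists_finite_edgeSet_forall_walk [Finite ι] {a b : ι → V} (p : ∀ i, G.Walk (a i) (b i)) :
    ∃ H ≤ G, H.edgeSet.Finite ∧
      ∀ i, ∃ q : H.Walk (a i) (b i), q.support = (p i).support ∧ ((p i).IsPath → q.IsPath) := by
  let E : Set (Sym2 V) := ⋃ i, {e | e ∈ (p i).edges}
  have hEG : E ⊆ G.edgeSet := Set.iUnion_subset fun i => (p i).edges_subset_edgeSet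
  have hE : (fromEdgeSet E).edgeSet = E := by
    rw [edgeSet_fromEdgeSet]
    exact sdiff_eq_left.2 (Set.disjoint_left.2 fun e he => G.not_isDiag_of_mem_edgeSet (hEG he))
  refine ⟨fromEdgeSet E, edgeSet_subset_edgeSet.1 (hE.trans_subset hEG), ?_, fun i => ?_⟩
  · rw [hE]
    exact Set.finite_iUnion fun i => (p i).edges.finite_toSet
  · have hp : ∀ e ∈ (p i).edges, e ∈ (fromEdgeSet E).edgeSet :=
      fun e he => hE.ge (Set.mem_iUnion_of_mem i he)
    exact ⟨(p i).transfer _ hp, Walk.support_transfer _ _, fun h => h.transfer hp⟩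

theorem IsLinkage.exists_finite_edgeSet [Finite ι] {T : ι → Set V} (hT : IsLinkage G A B T) :
    ∃ H ≤ G, H.edgeSet.Finite ∧ IsLinkage H A B T := by
  choose a ha b hb p hp hpT using hT.isPathSupport
  obtain ⟨H, hHG, hH, hq⟩ := exists_finite_edgeSet_forall_walk p
  refine ⟨H, hHG, hH, fun i => ?_, hT.pairwise_disjoint⟩
  obtain ⟨q, hqp, hq⟩ := hq i
  exact ⟨a i, ha i, b i, hb i, q, hq (hp i), hqp ▸ hpT i⟩

theorem exists_finite_edgeSet_not_separates [Finite ι] {C : ι → Set V}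
    (hC : ∀ i, ¬ Separates G A B (C i)) :
    ∃ H ≤ G, H.edgeSet.Finite ∧ ∀ i, ¬ Separates H A B (C i) := by
  simp only [Separates, not_forall] at hC
  choose a ha b hb p hp using hC
  obtain ⟨H, hHG, hH, hq⟩ := exists_finite_edgeSet_forall_walk p
  refine ⟨H, hHG, hH, fun i hi => hp i ?_⟩
  obtain ⟨q, hqp, -⟩ := hq i
  exact hqp ▸ hi _ (ha i) _ (hb i) q

theorem Separates.subset_iUnion_of_encard_le (hC : Separates G A B C) [Finite ι]
    {T : ι → Set V} (hT : IsLinkage G A B T) (hcard : C.encard ≤ ENat.card ι) :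
    C ⊆ ⋃ i, T i := by
  choose f hfT hfC using fun i => hC.inter_nonempty (hT.isPathSupport i)
  have hf : (Set.range f).encard = ENat.card ι := by
    rw [← Set.image_univ, (hT.injective_of_mem hfT).encard_image, Set.encard_univ]
  have hrange : Set.range f = C := (Set.finite_range f).eq_of_subset_of_encard_le
    (Set.range_subset_iff.2 hfC) (hf ▸ hcard)
  rw [← hrange]
  exact Set.range_subset_iff.2 fun i => Set.mem_iUnion_of_mem i (hfT i)

theorem IsLinkage.exists_isLinkage_succ {m : ℕ} {T : Fin m → Set V} (hT : IsLinkage G A B T)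
    (h : ∀ C, Separates G A B C → (m + 1 : ℕ) ≤ C.encard) :
    ∃ T' : Fin (m + 1) → Set V, IsLinkage G A B T' := by
  let U := ⋃ i, T i
  have hU : U.Finite := Set.finite_iUnion fun i => (hT.isPathSupport i).finite
  let small : Set (Set V) := {C | C ⊆ U ∧ C.encard ≤ m}
  have : Finite small := hU.finite_subsets.subset fun C hC => hC.1
  obtain ⟨H, hHG, hH, hsmall⟩ := exists_finite_edgeSet_not_separates (ι := small) (G := G)
    (A := A) (B := B) (C := (↑)) fun C hC =>
      (h C hC).not_gt (C.2.2.trans_lt (by exact_mod_cast m.lt_succ_self))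
  obtain ⟨K, hKG, hK, hTK⟩ := hT.exists_finite_edgeSet
  have hHK : HasMengerProperty (H ⊔ K) :=
    hasMengerProperty_of_finite_edgeSet (edgeSet_sup H K ▸ hH.union hK)
  obtain ⟨T', hT'⟩ := hHK A B (m + 1) fun C hC => by
    by_contra! hCm
    replace hCm : C.encard ≤ m := ENat.lt_natCast_add_one_iff.1 (by exact_mod_cast hCm)
    have hCU : C ⊆ U := hC.subset_iUnion_of_encard_le (hTK.mono le_sup_right) (by simpa using hCm)
    exact hsmall ⟨C, hCU, hCm⟩ (hC.anti_graph le_sup_left)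
  exact ⟨T', hT'.mono (sup_le hHG hKG)⟩

theorem hasMengerProperty (G : SimpleGraph V) : HasMengerProperty G := by
  intro A B k
  induction k with
  | zero => exact fun _ => ⟨Fin.elim0, fun i => i.elim0, fun i => i.elim0⟩
  | succ m ih =>
    intro h
    obtain ⟨T, hT⟩ := ih fun C hC => le_trans (by exact_mod_cast m.le_succ) (h C hC)
    exact hT.exists_isLinkage_succ h

/-! ### Fans -/

theorem notMem_support_of_deleteIncidenceSet {a b : V} (p : (G.deleteIncidenceSet v).Walk a b)
    (ha : a ≠ v) : v ∉ p.support := by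
  induction p with
  | nil => simpa using ha.symm
  | cons h p ih =>
    simpa [ha.symm] using ih (deleteIncidenceSet_adj.1 h).2.2

theorem IsLinkage.hasFan {S : Set V} {T : Fin k → Set V}
    (hT : IsLinkage (G.deleteIncidenceSet v) (G.neighborSet v) S T) : HasFan G v S k := by
  choose a ha b hb p hp hpT using hT.isPathSupport
  have hadj (i : Fin k) : G.Adj v (a i) := ha i
  have hmem (i : Fin k) (z : V) (hz : z ∈ (p i).support) : z ∈ T i := hpT i ▸ hz
  have hv (i : Fin k) : v ∉ (p i).support :=
    notMem_support_of_deleteIncidenceSet _ (hadj i).ne'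
  let q (i : Fin k) : G.Walk v (b i) := .cons (hadj i) ((p i).mapLe (G.deleteIncidenceSet_le v))
  have hq (i : Fin k) {z : V} (hz : z ∈ (q i).support) (hzv : z ≠ v) : z ∈ T i := by
    simp only [q, Walk.support_cons, Walk.support_mapLe_eq_support, List.mem_cons] at hz
    exact hmem i z (hz.resolve_left hzv)
  refine ⟨b, q, ?_, fun i => ?_, hb, fun i j hij z hi hj => ?_⟩
  · exact hT.injective_of_mem fun i => hmem i _ (p i).end_mem_support
  · exact (Walk.cons_isPath_iff _ _).2 ⟨by simpa using hp i, by simpa using hv i⟩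
  · by_contra hz
    exact hij (hT.eq_of_mem (hq i hi hz) (hq j hj hz))

theorem HasFan.le_encard {S : Set V} (h : HasFan G v S k) (hv : v ∉ C)
    (hC : Separates G {v} S C) : k ≤ C.encard := by
  obtain ⟨t, p, -, -, htS, hp⟩ := h
  choose f hf hfC using fun i => hC v rfl (t i) (htS i) (p i)
  have hinj : f.Injective := fun i j hij => by
    by_contra hne
    exact hv (hp i j hne (f i) (hf i) (hij ▸ hf j) ▸ hfC i)
  calc (k : ℕ∞) = (Set.range f).encard := by
        rw [← Set.image_univ, hinj.encard_image, Set.encard_univ, ENat.card_eq_coe_fintype_card,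
          Fintype.card_fin]
    _ ≤ C.encard := Set.encard_le_encard (Set.range_subset_iff.2 hfC)

theorem hasFan_iff_forall_separates {S : Set V} (hv : v ∉ S) :
    HasFan G v S k ↔ ∀ C, v ∉ C → Separates G {v} S C → k ≤ C.encard := by
  refine ⟨fun h C => h.le_encard, fun h => ?_⟩
  obtain ⟨T, hT⟩ := hasMengerProperty (G.deleteIncidenceSet v) (G.neighborSet v) S k fun C hC =>
    (h (C \ {v}) (by simp) (.of_deleteIncidenceSet hv hC)).trans
      (Set.encard_le_encard Set.sdiff_subset)
  exact hT.hasFan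

end

theorem stmt_0_general {V : Type*} (G : SimpleGraph V) (r : V → ℕ) (S : Set V) :
    VecConnSet G r S ↔
      ∀ X : Set V, X.Nonempty → (G.induce X).Connected →
        (∃ x ∈ X, (setNbhd G X).encard < r x) → (S ∩ X).Nonempty := by
  constructor
  · rintro hS X - - ⟨x, hx, hlt⟩
    by_contra hSX
    rw [Set.not_nonempty_iff_eq_empty, ← Set.disjoint_iff_inter_eq_empty] at hSX
    exact hlt.not_ge <| (hS x (hSX.notMem_of_mem_right hx)).le_encard (fun h => h.1 hx)
      (separates_setNbhd (Set.singleton_subset_iff.2 hx) hSX.symm)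
  · intro h v hv
    refine (hasFan_iff_forall_separates hv).2 fun C hvC hC => ?_
    by_contra! hlt
    have hvX : v ∈ reachAvoiding G {v} C := sdiff_subset_reachAvoiding ⟨rfl, hvC⟩
    obtain ⟨s, hsS, hsX⟩ := h _ ⟨v, hvX⟩ (connected_induce_reachAvoiding hvC)
      ⟨v, hvX, (Set.encard_le_encard setNbhd_reachAvoiding_subset).trans_lt hlt⟩
    exact Set.disjoint_left.1 (separates_iff_disjoint_reachAvoiding.1 hC) hsX hsS

theorem stmt_0 {V : Type*} [Fintype V] (G : SimpleGraph V) (r : V → ℕ) (S : Set V) :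
    VecConnSet G r S ↔
      ∀ X : Set V, X.Nonempty → (G.induce X).Connected →
        (∃ x ∈ X, (setNbhd G X).ncard < r x) → (S ∩ X).Nonempty := by
  simpa only [← (Set.toFinite _).cast_ncard_eq, Nat.cast_lt] using stmt_0_general G r S
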